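/- Let 𝓛 be an inverse category of height p > 0 and M a family of types indexed by 𝓛(0), and let 𝓛_{>0} denote the full subcategory of 𝓛 on the objects of positive rank, regarded as an inverse category with rank function rk − 1. Then the forgetful functor U : ∂_M 𝓛 ⥤ 𝓛_{>0}, sending an object (K, α) to K and a morphism (f, φ) to f, is a discrete opfibration. -/

import Mathlib

open CategoryTheory

universe w v u v₂ u₂ v₃ u₃

/-- An inverse category: a category equipped with a rank function such that every
morphism weakly decreases rank, and only identities preserve rank. -/
structure InverseRank (C : Type u) [Category.{v} C] where
  rk : C → ℕ
  rk_le : ∀ {K L : C} (f : K ⟶ L), rk L ≤ rk K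
  rk_id : ∀ {K L : C} (f : K ⟶ L), rk L = rk K → ∃ h : K = L, f = eqToHom h

/-- An inverse category has height `p` if every object has rank `< p`. -/
def InverseRank.HasHeight {C : Type u} [Category.{v} C] (r : InverseRank C) (p : ℕ) : Prop :=
  ∀ K : C, r.rk K < p

section

variable {C : Type u} [Category.{v} C]

/-- The objects of rank `m`. -/
abbrev RankObj (rk : C → ℕ) (m : ℕ) : Type u := {L : C // rk L = m}

/-- The fanout of `K` at `m`: pairs `(L, f)` with `L` of rank `m` and `f : K ⟶ L`. -/
abbrev Fanout (rk : C → ℕ) (K : C) (m : ℕ) : Type max u v :=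
  Σ L : RankObj rk m, (K ⟶ L.1)

/-- An object of the derivative `∂_M 𝓛`: a pair `(K, α)` with `K` of positive rank
(i.e. of rank `n + 1` for some `n`) and `α` a section of `M` over the fanout of `K`
at `0`. -/
structure DerivObj (rk : C → ℕ) (M : RankObj rk 0 → Type w) : Type max u v w where
  pt : C
  pos : 0 < rk pt
  sec : ∀ F : Fanout rk pt 0, M F.1

/-- The derivative category `∂_M 𝓛`: a morphism `(K₁, α₁) ⟶ (K₂, α₂)` is a morphism
`f : K₁ ⟶ K₂` of `𝓛` such that `α₁ (L, f ≫ g) = α₂ (L, g)` for every `(L, g)` in the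
fanout of `K₂` at `0`. -/
instance derivCategory (rk : C → ℕ) (M : RankObj rk 0 → Type w) :
    Category (DerivObj rk M) where
  Hom A B := {f : A.pt ⟶ B.pt // ∀ F : Fanout rk B.pt 0, A.sec ⟨F.1, f ≫ F.2⟩ = B.sec F}
  id A := ⟨𝟙 A.pt, fun F => by rw [Category.id_comp]⟩
  comp {A B Z} f g := ⟨f.1 ≫ g.1, fun F => by
    rw [Category.assoc]
    exact (f.2 ⟨F.1, g.1 ≫ F.2⟩).trans (g.2 F)⟩
  id_comp f := Subtype.ext (Category.id_comp f.1)
  comp_id f := Subtype.ext (Category.comp_id f.1)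
  assoc f g h := Subtype.ext (Category.assoc f.1 g.1 h.1)

/-- The rank function of the derivative category: `rk (K, α) := rk K - 1`. -/
abbrev derivRk (rk : C → ℕ) (M : RankObj rk 0 → Type w) : DerivObj rk M → ℕ :=
  fun A => rk A.pt - 1

end

section

variable {C : Type u} [Category.{v} C]

/-- The matching object `M_K X` of a diagram `X : 𝓛 ⥤ Type` at `K`: compatible
families `d` assigning to each `(L, f)` with `rk L < rk K` an element of `X L`. -/
structure MatchingObj (rk : C → ℕ) (X : C ⥤ Type w) (K : C) : Type max u v w where
  d : ∀ (L : C), rk L < rk K → (K ⟶ L) → X.obj L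
  compat : ∀ {L₁ L₂ : C} (h₁ : rk L₁ < rk K) (h₂ : rk L₂ < rk K) (g : L₁ ⟶ L₂),
    rk L₂ < rk L₁ → ∀ f₁ : K ⟶ L₁, X.map g (d L₁ h₁ f₁) = d L₂ h₂ (f₁ ≫ g)

/-- The matching map `X K → M_K X`, sending `x` to the family `(L, f) ↦ X(f)(x)`. -/
def matchMap (rk : C → ℕ) (X : C ⥤ Type w) (K : C) (x : X.obj K) : MatchingObj rk X K where
  d L _ f := X.map f x
  compat h₁ h₂ g hg f₁ := (FunctorToTypes.map_comp_apply X f₁ g x).symm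

/-- The restriction `X₀` of a diagram `X : 𝓛 ⥤ Type` to the rank-`0` objects. -/
def diagRestrict (rk : C → ℕ) (X : C ⥤ Type w) : RankObj rk 0 → Type w :=
  fun L => X.obj L.1

/-- The induced diagram `∂X : ∂_{X₀}𝓛 ⥤ Type` on the derivative:
`∂X (K, α) := { x : X K | X(f)(x) = α (L, f) for all (L, f) in the fanout of K at 0 }`. -/
def derivDiag (rk : C → ℕ) (X : C ⥤ Type w) :
    DerivObj rk (diagRestrict rk X) ⥤ Type w where
  obj A := {x : X.obj A.pt // ∀ F : Fanout rk A.pt 0, X.map F.2 x = A.sec F}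
  map {A B} f := ↾fun x => ⟨X.map f.1 x.1, fun F => by
    rw [← FunctorToTypes.map_comp_apply]
    exact (x.2 ⟨F.1, f.1 ≫ F.2⟩).trans (f.2 F)⟩
  map_id A := by
    refine ConcreteCategory.hom_ext _ _ fun x => ?_
    exact Subtype.ext (FunctorToTypes.map_id_apply X x.1)
  map_comp {A B Z} f g := by
    refine ConcreteCategory.hom_ext _ _ fun x => ?_
    exact Subtype.ext (FunctorToTypes.map_comp_apply X f.1 g.1 x.1)

end

section

variable {C : Type u} [Category.{v} C] {D : Type u₂} [Category.{v₂} D]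
  {E : Type u₃} [Category.{v₃} E]

/-- A functor between inverse categories is rank-preserving if `rk (F K) = rk K`. -/
def RankPres (F : C ⥤ D) (rkC : C → ℕ) (rkD : D → ℕ) : Prop :=
  ∀ K : C, rkD (F.obj K) = rkC K

/-- The induced map on fanouts of a rank-preserving functor, sending `(L, f)` to
`(F L, F f)`. -/
def fanoutMap (F : C ⥤ D) {rkC : C → ℕ} {rkD : D → ℕ} (hF : RankPres F rkC rkD)
    (K : C) (m : ℕ) : Fanout rkC K m → Fanout rkD (F.obj K) m :=
  fun G => ⟨⟨F.obj G.1.1, (hF G.1.1).trans G.1.2⟩, F.map G.2⟩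

/-- A rank-preserving functor is a discrete opfibration if all its induced maps on
fanouts (at `m < rk K`) are bijections. -/
structure IsDiscOpfib (F : C ⥤ D) (rkC : C → ℕ) (rkD : D → ℕ) : Prop where
  pres : RankPres F rkC rkD
  bij : ∀ (K : C) (m : ℕ), m < rkC K → Function.Bijective (fanoutMap F pres K m)

/-- The fanout bijection of a discrete opfibration, as an equivalence. -/
noncomputable def fanoutEquiv (F : C ⥤ D) {rkC : C → ℕ} {rkD : D → ℕ}
    (hF : IsDiscOpfib F rkC rkD) (K : C) (m : ℕ) (hm : m < rkC K) :
    Fanout rkC K m ≃ Fanout rkD (F.obj K) m :=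
  Equiv.ofBijective _ (hF.bij K m hm)

theorem isDiscOpfib_id (rk : C → ℕ) : IsDiscOpfib (𝟭 C) rk rk := by
  refine ⟨fun _ => rfl, fun K m hm => ?_⟩
  exact Function.bijective_id

theorem isDiscOpfib_comp {F : C ⥤ D} {G : D ⥤ E} {rkC : C → ℕ} {rkD : D → ℕ}
    {rkE : E → ℕ} (hF : IsDiscOpfib F rkC rkD) (hG : IsDiscOpfib G rkD rkE) :
    IsDiscOpfib (F ⋙ G) rkC rkE := by
  refine ⟨fun K => (hG.pres (F.obj K)).trans (hF.pres K), fun K m hm => ?_⟩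
  exact (hG.bij (F.obj K) m (by rw [hF.pres]; exact hm)).comp (hF.bij K m hm)

end

/-- The forgetful functor `U : ∂_M 𝓛 ⥤ 𝓛_{>0}` from the derivative to the full
subcategory of `𝓛` on the objects of positive rank, sending `(K, α)` to `K` and
`(f, φ)` to `f`. -/
def forgetDeriv {C : Type u} [Category.{v} C] (rk : C → ℕ)
    (M : RankObj rk 0 → Type w) :
    DerivObj rk M ⥤ ObjectProperty.FullSubcategory (fun K : C => 0 < rk K) where
  obj A := ⟨A.pt, A.pos⟩
  map f := ObjectProperty.homMk f.1
  map_id A := rfl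
  map_comp f g := rfl

section

variable {C : Type u} [Category.{v} C]

/-- The rank function `rk - 1` of `𝓛_{>0}`. The truncated subtraction is harmless, as the objects
have positive rank. -/
abbrev posRk (rk : C → ℕ) : ObjectProperty.FullSubcategory (fun K : C => 0 < rk K) → ℕ :=
  fun K => rk K.obj - 1

theorem rankPres_forgetDeriv (rk : C → ℕ) (M : RankObj rk 0 → Type w) :
    RankPres (forgetDeriv rk M) (derivRk rk M) (posRk rk) :=
  fun _ => rfl

namespace DerivObj

variable {rk : C → ℕ} {M : RankObj rk 0 → Type w}

/-- The pushforward of `(K, α)` along `f : K ⟶ L`: the object `(L, α')` of the derivative with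
`α' (N, g) = α (N, f ≫ g)`. It is the target of the lift of `f` to the derivative. -/
def pushforward (A : DerivObj rk M) {L : C} (hL : 0 < rk L) (f : A.pt ⟶ L) : DerivObj rk M where
  pt := L
  pos := hL
  sec F := A.sec ⟨F.1, f ≫ F.2⟩

/-- The lift of `f : K ⟶ L` to a morphism of the derivative with source `(K, α)`. -/
def toPushforward (A : DerivObj rk M) {L : C} (hL : 0 < rk L) (f : A.pt ⟶ L) :
    A ⟶ A.pushforward hL f :=
  ⟨f, fun _ => rfl⟩

-- A morphism of `𝓛` has only one lift with a given source, because the condition on morphisms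
-- of the derivative determines the section of the target.
@[elab_as_elim]
theorem hom_induction {A : DerivObj rk M} {motive : ∀ B : DerivObj rk M, (A ⟶ B) → Prop}
    (toPushforward : ∀ {L : C} (hL : 0 < rk L) (f : A.pt ⟶ L),
      motive (A.pushforward hL f) (A.toPushforward hL f))
    {B : DerivObj rk M} (g : A ⟶ B) : motive B g := by
  obtain ⟨L, hL, β⟩ := B
  obtain ⟨f : A.pt ⟶ L, hf⟩ := g
  have sec_eq : (fun F : Fanout rk L 0 => A.sec ⟨F.1, f ≫ F.2⟩) = β := funext hf
  subst sec_eq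
  exact toPushforward hL f

/-- The map on fanouts which lifts every morphism of `𝓛_{>0}` out of `K` to a morphism of the
derivative out of `(K, α)`; it inverts the map on fanouts of the forgetful functor. -/
def liftFanout (A : DerivObj rk M) (m : ℕ)
    (G : Fanout (posRk rk) ((forgetDeriv rk M).obj A) m) : Fanout (derivRk rk M) A m :=
  ⟨⟨A.pushforward G.1.1.property G.2.hom, G.1.2⟩, A.toPushforward G.1.1.property G.2.hom⟩

theorem leftInverse_liftFanout (A : DerivObj rk M) (m : ℕ) :
    Function.LeftInverse (A.liftFanout m) (fanoutMap _ (rankPres_forgetDeriv rk M) A m) := by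
  rintro ⟨⟨B, hB⟩, g : A ⟶ B⟩
  induction g using hom_induction with
  | toPushforward => rfl

theorem rightInverse_liftFanout (A : DerivObj rk M) (m : ℕ) :
    Function.RightInverse (A.liftFanout m) (fanoutMap _ (rankPres_forgetDeriv rk M) A m) :=
  fun _ => rfl

end DerivObj

theorem forgetDeriv_isDiscOpfib_general (rk : C → ℕ) (M : RankObj rk 0 → Type w) :
    IsDiscOpfib (forgetDeriv rk M) (derivRk rk M) (posRk rk) where
  pres := rankPres_forgetDeriv rk M
  bij A m _ :=
    ⟨(A.leftInverse_liftFanout m).injective, (A.rightInverse_liftFanout m).surjective⟩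

end

/-- For an inverse category `𝓛` of height `p > 0` and a family `M` of
types indexed by `𝓛(0)`, the forgetful functor `U : ∂_M 𝓛 ⥤ 𝓛_{>0}` is a discrete
opfibration, where `∂_M 𝓛` carries the rank function `rk (K, α) = rk K - 1` and
`𝓛_{>0}` carries the rank function `rk - 1`. -/
theorem forgetDeriv_isDiscOpfib {C : Type u} [Category.{v} C] (r : InverseRank C)
    (p : ℕ) (hp : 0 < p) (hh : r.HasHeight p) (M : RankObj r.rk 0 → Type w) :
    IsDiscOpfib (forgetDeriv r.rk M) (derivRk r.rk M)
      (fun K : ObjectProperty.FullSubcategory (fun K : C => 0 < r.rk K) => r.rk K.obj - 1) :=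
  forgetDeriv_isDiscOpfib_general r.rk M
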